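/- Assume RH. Then there exist a constant A > 0 and a natural number n₀ such that for every integer n ≥ n₀ there is a real number T with n < T < n + 1 such that |T − γ| > A / log n for every real number γ with ζ(1/2 + iγ) = 0. In particular, the segment of the critical line from 1/2 + i(T − A/log n) to 1/2 + i(T + A/log n) contains no zeros of ζ. -/

import Mathlib

open Complex

/-!
Zeros in a disc force a holomorphic function to be small at the centre. By Jensen's formula on a
disc about `2 + i(x + 1/2)`, where `ζ` is bounded away from `0` while `|ζ|` is `O(x)` on the
boundary circle, the region `1/2 ≤ Re s`, `x ≤ Im s ≤ x + 1` contains `O(log x)` zeros. The symmetry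
`ρ ↦ 1 - conj ρ` of the zeros preserves ordinates, so all nontrivial zeros together have `O(log x)`
ordinates in `[x, x + 1]`. Cutting `(x, x + 1)` into more pieces than there are ordinates leaves an
empty piece of length `≫ 1 / log x`, and `T` is its midpoint.
-/

section Jensen

open Metric Real

variable {f : ℂ → ℂ} {c : ℂ} {r R M : ℝ}

lemma one_le_divisor_of_eq_zero {U : Set ℂ} {z : ℂ} (hf : AnalyticOnNhd ℂ f U)
    (hU : IsPreconnected U) (hc : c ∈ U) (hfc : f c ≠ 0) (hz : z ∈ U) (hfz : f z = 0) :
    1 ≤ MeromorphicOn.divisor f U z := by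
  have hne_zero : analyticOrderAt f z ≠ 0 := (hf z hz).analyticOrderAt_ne_zero.mpr hfz
  have hne_top : analyticOrderAt f z ≠ ⊤ :=
    hf.analyticOrderAt_ne_top_of_isPreconnected hU hc hz <| by
      simp [(hf c hc).analyticOrderAt_eq_zero.mpr hfc]
  lift analyticOrderAt f z to ℕ using hne_top with m hm
  rw [MeromorphicOn.AnalyticOnNhd.divisor_apply hf hz, ← hm]
  have : m ≠ 0 := by simpa using hne_zero
  simpa using Nat.one_le_iff_ne_zero.mpr this

lemma card_mul_log_add_log_le_circleAverage (hr : 0 < r) (hrR : r ≤ R)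
    (hf : AnalyticOnNhd ℂ f (closedBall c R)) (hfc : f c ≠ 0) {Z : Finset ℂ}
    (hZ : ∀ z ∈ Z, z ∈ closedBall c r ∧ f z = 0) :
    Z.card * Real.log (R / r) + Real.log ‖f c‖ ≤ circleAverage (Real.log ‖f ·‖) c R := by
  have hR : 0 < R := hr.trans_le hrR
  rw [← abs_of_pos hR] at hf
  set D := MeromorphicOn.divisor f (closedBall c |R|) with hD
  have hD_nonneg : 0 ≤ D := MeromorphicOn.AnalyticOnNhd.divisor_nonneg hf
  have hD_finite : (D : ℂ → ℤ).support.Finite := D.finiteSupport (isCompact_closedBall c |R|)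
  have one_le_D : ∀ z ∈ Z, 1 ≤ D z := fun z hz ↦
    one_le_divisor_of_eq_zero hf (convex_closedBall c |R|).isPreconnected
      (mem_closedBall_self (abs_nonneg R)) hfc
      (closedBall_subset_closedBall (hrR.trans (le_abs_self R)) (hZ z hz).1) (hZ z hz).2
  have hZD : Z ⊆ hD_finite.toFinset := fun z hz ↦ by
    simpa using (zero_lt_one.trans_le (one_le_D z hz)).ne'
  have log_le : ∀ z ∈ Z, Real.log (R / r) ≤ Real.log (R * ‖c - z‖⁻¹) := fun z hz ↦ by
    have hzc : 0 < ‖c - z‖ := norm_pos_iff.mpr <| sub_ne_zero.mpr <| by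
      rintro rfl
      exact hfc (hZ _ hz).2
    have hzr : ‖c - z‖ ≤ r := by simpa [dist_comm, dist_eq_norm] using (hZ z hz).1
    rw [← div_eq_mul_inv]
    gcongr
  have log_nonneg : ∀ z ∈ hD_finite.toFinset, 0 ≤ Real.log (R * ‖c - z‖⁻¹) := fun z hz ↦ by
    have hzR : ‖c - z‖ ≤ R := by
      have := D.supportWithinDomain (hD_finite.mem_toFinset.mp hz)
      simpa [dist_comm, dist_eq_norm, abs_of_pos hR] using this
    rcases (norm_nonneg (c - z)).eq_or_lt with hzc | hzc
    · simp [← hzc]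
    · exact Real.log_nonneg <| by rwa [← div_eq_mul_inv, one_le_div hzc]
  rw [hf.circleAverage_log_norm hR.ne' hfc, ← hD,
    finsum_eq_sum_of_support_subset (s := hD_finite.toFinset) _ (by
      rw [hD_finite.coe_toFinset]
      exact fun z hz h ↦ hz (by simp [h]))]
  gcongr
  calc Z.card * Real.log (R / r) = ∑ _z ∈ Z, Real.log (R / r) := by simp
    _ ≤ ∑ z ∈ Z, D z * Real.log (R * ‖c - z‖⁻¹) := Finset.sum_le_sum fun z hz ↦
        (log_le z hz).trans <| le_mul_of_one_le_left (log_nonneg z (hZD hz)) <| by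
          exact_mod_cast one_le_D z hz
    _ ≤ ∑ z ∈ hD_finite.toFinset, D z * Real.log (R * ‖c - z‖⁻¹) :=
        Finset.sum_le_sum_of_subset_of_nonneg hZD fun z hz _ ↦
          mul_nonneg (by exact_mod_cast hD_nonneg z) (log_nonneg z hz)

lemma card_mul_log_le_log_div (hr : 0 < r) (hrR : r ≤ R)
    (hf : AnalyticOnNhd ℂ f (closedBall c R)) (hfc : f c ≠ 0)
    (hM : 0 < M) (hfM : ∀ z ∈ sphere c R, ‖f z‖ ≤ M) {Z : Finset ℂ}
    (hZ : ∀ z ∈ Z, z ∈ closedBall c r ∧ f z = 0) :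
    Z.card * Real.log (R / r) ≤ Real.log (M / ‖f c‖) := by
  have hR : 0 < R := hr.trans_le hrR
  -- Normalising the bound to `1` makes `log ‖f z / M‖ ≤ 0` hold at zeros too, where `log 0 = 0`.
  have hg : AnalyticOnNhd ℂ (fun z ↦ f z / M) (closedBall c R) := fun z hz ↦ (hf z hz).div_const
  have norm_g (z : ℂ) : ‖f z / M‖ = ‖f z‖ / M := by simp [abs_of_pos hM]
  have average_nonpos : circleAverage (fun z ↦ Real.log ‖f z / M‖) c R ≤ 0 := by
    refine circleAverage_mono_on_of_le_circle
      ((hg.mono sphere_subset_closedBall).meromorphicOn.circleIntegrable_log_norm_of_nonneg hR.le)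
      fun z hz ↦ Real.log_nonpos (norm_nonneg _) ?_
    rw [norm_g, div_le_one hM]
    exact hfM z (by rwa [abs_of_pos hR] at hz)
  have jensen := card_mul_log_add_log_le_circleAverage hr hrR hg
    (div_ne_zero hfc (by exact_mod_cast hM.ne'))
    fun z hz ↦ ⟨(hZ z hz).1, by rw [(hZ z hz).2, zero_div]⟩
  rw [norm_g, ← inv_div M, Real.log_inv] at jensen
  linarith

end Jensen

section ZetaBounds

open Set Filter Topology MeasureTheory

/-- The fractional part `{t}` cut off to `t > 1`. Its Mellin transform at `-s` is the integral
`∫₁^∞ {t} t^(-s-1) dt` in the continuation of `ζ` to `Re s > 0`. -/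
noncomputable def fractIoi : ℝ → ℂ := (Ioi (1 : ℝ)).indicator fun t ↦ ((Int.fract t : ℝ) : ℂ)

lemma norm_fractIoi_le_one (t : ℝ) : ‖fractIoi t‖ ≤ 1 := by
  refine (norm_indicator_le_norm_self _ t).trans ?_
  rw [norm_real, Real.norm_of_nonneg (Int.fract_nonneg t)]
  exact (Int.fract_lt_one t).le

lemma measurable_fractIoi : Measurable fractIoi :=
  (measurable_ofReal.comp measurable_fract).indicator measurableSet_Ioi

lemma differentiableAt_mellin_fractIoi {s : ℂ} (hs : s.re < 0) :
    DifferentiableAt ℂ (mellin fractIoi) s := by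
  have hloc : LocallyIntegrable fractIoi :=
    (locallyIntegrable_const (1 : ℝ)).mono measurable_fractIoi.aestronglyMeasurable <|
      .of_forall fun t ↦ by simpa using norm_fractIoi_le_one t
  refine mellin_differentiableAt_of_isBigO_rpow (a := 0) (b := s.re - 1)
    (hloc.locallyIntegrableOn _) ?_ hs ?_ (sub_one_lt _)
  · exact .of_bound 1 (.of_forall fun t ↦ by simpa using norm_fractIoi_le_one t)
  · have eventually_eq_zero : fractIoi =ᶠ[𝓝[>] 0] 0 := by
      filter_upwards [nhdsWithin_le_nhds (Iio_mem_nhds one_pos)] with t ht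
      exact indicator_of_notMem (notMem_Ioi.mpr (mem_Iio.mp ht).le) _
    exact eventually_eq_zero.trans_isBigO (Asymptotics.isBigO_zero _ _)

lemma mellin_fractIoi (s : ℂ) :
    mellin fractIoi (-s) = ∫ t in Ioi (1 : ℝ), (t : ℂ) ^ (-s - 1) * (Int.fract t : ℝ) := by
  rw [mellin, ← inter_eq_right.mpr (Ioi_subset_Ioi (zero_le_one (α := ℝ))),
    ← setIntegral_indicator measurableSet_Ioi]
  refine setIntegral_congr_fun measurableSet_Ioi fun t _ ↦ ?_
  simp only [fractIoi, indicator_apply, smul_eq_mul, mul_ite, mul_zero]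

lemma norm_cpow_mul_fract_le (s : ℂ) {t : ℝ} (ht : 0 < t) :
    ‖(t : ℂ) ^ (-s - 1) * (Int.fract t : ℝ)‖ ≤ t ^ (-s.re - 1) := by
  rw [norm_mul, norm_cpow_eq_rpow_re_of_pos ht, norm_real,
    Real.norm_of_nonneg (Int.fract_nonneg t)]
  exact mul_le_of_le_one_right (Real.rpow_nonneg ht.le _) (Int.fract_lt_one t).le

lemma norm_mellin_fractIoi_le {s : ℂ} (hs : 0 < s.re) : ‖mellin fractIoi (-s)‖ ≤ 1 / s.re := by
  have hlt : -s.re - 1 < -1 := by linarith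
  calc ‖mellin fractIoi (-s)‖ ≤ ∫ t in Ioi (1 : ℝ), t ^ (-s.re - 1) := by
        rw [mellin_fractIoi]
        exact norm_integral_le_of_norm_le (integrableOn_Ioi_rpow_of_lt hlt one_pos) <|
          (ae_restrict_mem measurableSet_Ioi).mono fun t ht ↦
            norm_cpow_mul_fract_le s (one_pos.trans ht)
    _ = 1 / s.re := by simp [integral_Ioi_rpow_of_lt hlt one_pos]

lemma integrableOn_cpow_mul_fract {s : ℂ} (hs : 0 < s.re) :
    IntegrableOn (fun t : ℝ ↦ (t : ℂ) ^ (-s - 1) * (Int.fract t : ℝ)) (Ioi 1) := by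
  have hmeas : Measurable fun t : ℝ ↦ (t : ℂ) ^ (-s - 1) * (Int.fract t : ℝ) :=
    (measurable_ofReal.pow_const _).mul (measurable_ofReal.comp measurable_fract)
  exact (integrableOn_Ioi_rpow_of_lt (by linarith : -s.re - 1 < -1) one_pos).mono'
    hmeas.aestronglyMeasurable <| (ae_restrict_mem measurableSet_Ioi).mono fun t ht ↦
      norm_cpow_mul_fract_le s (one_pos.trans ht)

lemma floor_mul_cpow {s : ℂ} {t : ℝ} (ht : 0 < t) :
    (⌊t⌋₊ : ℂ) * (t : ℂ) ^ (-(s + 1)) =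
      (t : ℂ) ^ (-s) - (t : ℂ) ^ (-s - 1) * (Int.fract t : ℝ) := by
  have hfloor : (⌊t⌋₊ : ℂ) = t - (Int.fract t : ℝ) := by
    rw [← ofReal_natCast, natCast_floor_eq_intCast_floor ht.le, ← Int.self_sub_fract, ofReal_sub]
  have hpow : (t : ℂ) ^ (-s) = (t : ℂ) ^ (-s - 1) * t := by
    nth_rw 3 [← cpow_one (t : ℂ)]
    rw [← cpow_add _ _ (by exact_mod_cast ht.ne'), sub_add_cancel]
  rw [hfloor, hpow, neg_add']
  ring

lemma riemannZeta_eq_of_one_lt_re {s : ℂ} (hs : 1 < s.re) :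
    riemannZeta s = s / (s - 1) - s * mellin fractIoi (-s) := by
  have hneg : (-s).re < -1 := by simpa using hs
  have partial_sums_isBigO :
      (fun n : ℕ ↦ ∑ k ∈ Finset.Icc 1 n, ‖(1 : ℕ → ℂ) k‖) =O[atTop] fun n ↦ (n : ℝ) ^ (1 : ℝ) :=
    .of_bound 1 (.of_forall fun n ↦ by simp)
  calc riemannZeta s
      = s * ∫ t in Ioi (1 : ℝ), (⌊t⌋₊ : ℂ) * (t : ℂ) ^ (-(s + 1)) := by
        rw [← LSeries_one_eq_riemannZeta hs,
          LSeries_eq_mul_integral' 1 zero_le_one hs partial_sums_isBigO]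
        simp
    _ = s * ∫ t in Ioi (1 : ℝ), ((t : ℂ) ^ (-s) - (t : ℂ) ^ (-s - 1) * (Int.fract t : ℝ)) := by
        congr 1
        exact setIntegral_congr_fun measurableSet_Ioi fun t ht ↦ floor_mul_cpow (one_pos.trans ht)
    _ = s * (1 / (s - 1) - mellin fractIoi (-s)) := by
        rw [integral_sub (integrableOn_Ioi_cpow_of_lt hneg one_pos)
          (integrableOn_cpow_mul_fract (one_pos.trans hs)), mellin_fractIoi,
          integral_Ioi_cpow_of_lt hneg one_pos, ofReal_one, one_cpow, neg_add_eq_sub,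
          ← neg_sub s 1, neg_div_neg_eq]
    _ = s / (s - 1) - s * mellin fractIoi (-s) := by ring

lemma riemannZeta₁_eq_of_re_pos {s : ℂ} (hs : 0 < s.re) :
    riemannZeta₁ s = s - (s - 1) * (s * mellin fractIoi (-s)) := by
  -- `(s - 1) ζ(s)` has no pole, so the identity theorem applies on the whole convex half-plane.
  set H : Set ℂ := {z | 0 < z.re}
  have hH : IsOpen H := isOpen_lt continuous_const continuous_re
  have analytic_rhs : AnalyticOnNhd ℂ (fun z ↦ z - (z - 1) * (z * mellin fractIoi (-z))) H := by
    refine DifferentiableOn.analyticOnNhd (fun z hz ↦ ?_) hH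
    have : DifferentiableAt ℂ (fun z ↦ mellin fractIoi (-z)) z :=
      (differentiableAt_mellin_fractIoi (by simpa [H] using hz)).comp z differentiableAt_id.neg
    exact DifferentiableAt.differentiableWithinAt (by fun_prop)
  have eventually_eq :
      riemannZeta₁ =ᶠ[𝓝 2] fun z ↦ z - (z - 1) * (z * mellin fractIoi (-z)) := by
    filter_upwards [(isOpen_lt continuous_const continuous_re).mem_nhds
      (show (1 : ℝ) < (2 : ℂ).re by simp)] with z hz
    have hz1 : z ≠ 1 := by
      rintro rfl
      simp at hz
    have hz1' : z - 1 ≠ 0 := sub_ne_zero.mpr hz1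
    rw [← mul_right_inj' (inv_ne_zero hz1'), ← riemannZeta_eq_inv_sub_mul hz1,
      riemannZeta_eq_of_one_lt_re hz]
    field_simp
  have analytic_lhs : AnalyticOnNhd ℂ riemannZeta₁ H :=
    differentiable_riemannZeta₁.differentiableOn.analyticOnNhd hH
  exact analytic_lhs.eqOn_of_preconnected_of_eventuallyEq analytic_rhs
    (convex_halfSpace_re_gt 0).isPreconnected (by simp [H]) eventually_eq hs

lemma riemannZeta_eq_of_re_pos {s : ℂ} (hs : 0 < s.re) (hs1 : s ≠ 1) :
    riemannZeta s = s / (s - 1) - s * mellin fractIoi (-s) := by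
  have : s - 1 ≠ 0 := sub_ne_zero.mpr hs1
  rw [riemannZeta_eq_inv_sub_mul hs1, riemannZeta₁_eq_of_re_pos hs]
  field_simp

lemma norm_riemannZeta_le {s : ℂ} (hs : 0 < s.re) (hs1 : s ≠ 1) :
    ‖riemannZeta s‖ ≤ ‖s‖ / ‖s - 1‖ + ‖s‖ * (1 / s.re) := by
  rw [riemannZeta_eq_of_re_pos hs hs1]
  refine (norm_sub_le _ _).trans ?_
  rw [norm_div, norm_mul]
  gcongr
  exact norm_mellin_fractIoi_le hs

lemma norm_inv_riemannZeta_le {s : ℂ} (hs : 1 < s.re) :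
    ‖(riemannZeta s)⁻¹‖ ≤ ∑' n : ℕ, 1 / (n : ℝ) ^ s.re := by
  have inv_eq : (riemannZeta s)⁻¹ = LSeries (fun n ↦ (ArithmeticFunction.moebius n : ℂ)) s := by
    rw [← LSeries_one_eq_riemannZeta hs]
    exact inv_eq_of_mul_eq_one_right (LSeries_one_mul_Lseries_moebius hs)
  rw [inv_eq]
  refine tsum_of_norm_bounded (Real.summable_one_div_nat_rpow.mpr hs).hasSum fun n ↦ ?_
  rw [LSeries.norm_term_eq]
  split_ifs
  · positivity
  · gcongr
    rw [norm_intCast]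
    exact_mod_cast ArithmeticFunction.abs_moebius_le_one

lemma norm_inv_riemannZeta_le_two {s : ℂ} (hs : s.re = 2) : ‖(riemannZeta s)⁻¹‖ ≤ 2 := by
  calc ‖(riemannZeta s)⁻¹‖ ≤ ∑' n : ℕ, 1 / (n : ℝ) ^ s.re := norm_inv_riemannZeta_le (by linarith)
    _ = Real.pi ^ 2 / 6 := by simpa [hs] using hasSum_zeta_two.tsum_eq
    _ ≤ 2 := by nlinarith [Real.pi_pos, Real.pi_lt_d2]

end ZetaBounds

section ZeroCounting

open Metric

variable {x : ℝ}

lemma norm_riemannZeta_le_of_mem_closedBall (hx : 3 ≤ x) {z : ℂ}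
    (hz : z ∈ closedBall (⟨2, x + 1 / 2⟩ : ℂ) (9 / 5)) : ‖riemannZeta z‖ ≤ 24 * x := by
  rw [mem_closedBall, dist_eq_norm] at hz
  have hre := abs_le.mp ((abs_re_le_norm _).trans hz)
  have him := abs_le.mp ((abs_im_le_norm _).trans hz)
  simp only [sub_re, sub_im] at hre him
  have norm_le : ‖z‖ ≤ 4 * x := by
    refine (norm_le_abs_re_add_abs_im z).trans ?_
    rw [abs_of_nonneg (by linarith), abs_of_nonneg (by linarith)]
    linarith
  have one_le_norm : 1 ≤ ‖z - 1‖ :=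
    calc (1 : ℝ) ≤ (z - 1).im := by rw [sub_im, one_im]; linarith
      _ ≤ ‖z - 1‖ := im_le_norm _
  have hz1 : z ≠ 1 := by
    rintro rfl
    norm_num at one_le_norm
  calc ‖riemannZeta z‖ ≤ ‖z‖ / ‖z - 1‖ + ‖z‖ * (1 / z.re) :=
        norm_riemannZeta_le (by linarith) hz1
    _ ≤ ‖z‖ / 1 + ‖z‖ * (1 / (1 / 5)) := by gcongr; linarith
    _ ≤ 24 * x := by linarith

lemma mem_closedBall_of_riemannZeta_eq_zero {ρ : ℂ} (hρ : riemannZeta ρ = 0) (hre : 1 / 2 ≤ ρ.re)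
    (him : ρ.im ∈ Set.Icc x (x + 1)) : ρ ∈ closedBall (⟨2, x + 1 / 2⟩ : ℂ) (8 / 5) := by
  have hre' : ρ.re < 1 := not_le.mp fun h ↦ riemannZeta_ne_zero_of_one_le_re h hρ
  rw [mem_closedBall, dist_eq_norm, norm_eq_sqrt_sq_add_sq]
  refine Real.sqrt_le_iff.mpr ⟨by norm_num, ?_⟩
  simp only [sub_re, sub_im]
  nlinarith [him.1, him.2]

lemma card_zeros_mul_log_le (hx : 3 ≤ x) {Z : Finset ℂ}
    (hZ : ∀ ρ ∈ Z, riemannZeta ρ = 0 ∧ 1 / 2 ≤ ρ.re ∧ ρ.im ∈ Set.Icc x (x + 1)) :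
    Z.card * Real.log (9 / 8) ≤ 5 * Real.log x := by
  set c : ℂ := ⟨2, x + 1 / 2⟩ with hc
  have hcζ : riemannZeta c ≠ 0 := riemannZeta_ne_zero_of_one_lt_re (by simp [hc])
  have analytic : AnalyticOnNhd ℂ riemannZeta (closedBall c (9 / 5)) := by
    refine analyticOn_riemannZeta.mono ?_
    rintro z hz rfl
    have him := (abs_le.mp ((abs_im_le_norm _).trans (mem_closedBall_iff_norm.mp hz))).1
    simp only [hc, sub_im, one_im] at him
    linarith
  have jensen := card_mul_log_le_log_div (r := 8 / 5) (R := 9 / 5) (M := 24 * x) (by norm_num)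
    (by norm_num) analytic hcζ (by linarith)
    (fun z hz ↦ norm_riemannZeta_le_of_mem_closedBall hx (sphere_subset_closedBall hz))
    (Z := Z) fun ρ hρ ↦ ⟨mem_closedBall_of_riemannZeta_eq_zero (hZ ρ hρ).1 (hZ ρ hρ).2.1
      (hZ ρ hρ).2.2, (hZ ρ hρ).1⟩
  calc Z.card * Real.log (9 / 8) = Z.card * Real.log (9 / 5 / (8 / 5)) := by norm_num
    _ ≤ Real.log (24 * x / ‖riemannZeta c‖) := jensen
    _ ≤ Real.log (x ^ 5) := by
        refine Real.log_le_log (by positivity) ?_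
        calc 24 * x / ‖riemannZeta c‖ = 24 * x * ‖(riemannZeta c)⁻¹‖ := by
              rw [norm_inv, div_eq_mul_inv]
          _ ≤ 24 * x * 2 := by gcongr; exact norm_inv_riemannZeta_le_two rfl
          _ ≤ 3 ^ 4 * x := by linarith
          _ ≤ x ^ 4 * x := by gcongr
          _ = x ^ 5 := by ring
    _ = 5 * Real.log x := by rw [Real.log_pow]; norm_num

/-- The ordinates of the nontrivial zeros of `ζ`. The condition `0 < ρ.re` alone singles out the
nontrivial zeros because `ζ` has no zeros with `1 ≤ ρ.re`. -/
def zetaOrdinates : Set ℝ := im '' {ρ : ℂ | riemannZeta ρ = 0 ∧ 0 < ρ.re}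

lemma riemannZeta_one_sub_conj_eq_zero {ρ : ℂ} (hρ : riemannZeta ρ = 0) (hre : 0 < ρ.re) :
    riemannZeta (1 - (starRingEnd ℂ) ρ) = 0 := by
  have hne_neg (n : ℕ) : ρ ≠ -n := by
    rintro rfl
    simp only [neg_re, natCast_re, neg_pos] at hre
    exact hre.not_ge n.cast_nonneg
  have hne_one : ρ ≠ 1 := by
    rintro rfl
    exact riemannZeta_one_ne_zero hρ
  have : riemannZeta (1 - ρ) = 0 := by rw [riemannZeta_one_sub hne_neg hne_one, hρ, mul_zero]
  rw [← map_one (starRingEnd ℂ), ← map_sub, riemannZeta_conj, this, map_zero]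

lemma exists_zero_half_le_re_of_mem_zetaOrdinates {γ : ℝ} (hγ : γ ∈ zetaOrdinates) :
    ∃ ρ : ℂ, riemannZeta ρ = 0 ∧ 1 / 2 ≤ ρ.re ∧ ρ.im = γ := by
  obtain ⟨ρ, ⟨hρ, hre⟩, rfl⟩ := hγ
  rcases le_total (1 / 2) ρ.re with h | h
  · exact ⟨ρ, hρ, h, rfl⟩
  · exact ⟨1 - (starRingEnd ℂ) ρ, riemannZeta_one_sub_conj_eq_zero hρ hre,
      by simp only [sub_re, one_re, conj_re]; linarith, by simp⟩

lemma card_ordinates_mul_log_le (hx : 3 ≤ x) {S : Finset ℝ}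
    (hS : (S : Set ℝ) ⊆ zetaOrdinates ∩ Set.Icc x (x + 1)) :
    S.card * Real.log (9 / 8) ≤ 5 * Real.log x := by
  choose! ρ hζ hre him using fun γ (hγ : γ ∈ S) ↦
    exists_zero_half_le_re_of_mem_zetaOrdinates (hS hγ).1
  have hinj : Set.InjOn ρ S := fun γ hγ γ' hγ' h ↦ by rw [← him γ hγ, h, him γ' hγ']
  rw [← Finset.card_image_of_injOn hinj]
  refine card_zeros_mul_log_le hx fun z hz ↦ ?_
  obtain ⟨γ, hγ, rfl⟩ := Finset.mem_image.mp hz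
  exact ⟨hζ γ hγ, hre γ hγ, by rw [him γ hγ]; exact (hS hγ).2⟩

end ZeroCounting

lemma exists_mem_Ioo_forall_lt_abs_sub {Γ : Set ℝ} {a b δ : ℝ} {N : ℕ} (hab : a < b)
    (hΓ : ∀ S : Finset ℝ, (S : Set ℝ) ⊆ Γ ∩ Set.Ioo a b → S.card < N)
    (hδ : δ * (2 * N) < b - a) :
    ∃ T ∈ Set.Ioo a b, ∀ γ ∈ Γ, δ < |T - γ| := by
  -- If the midpoints of `N` disjoint intervals of length `2 * d > 2 * δ` all fail to be `T`, then
  -- each of these intervals contains its own element of `Γ`.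
  by_contra! hdense
  have hN : (0 : ℝ) < N := by exact_mod_cast hΓ ∅ (by simp)
  obtain ⟨d, hd⟩ : ∃ d, d * (2 * N) = b - a := ⟨(b - a) / (2 * N), by field_simp⟩
  have hd_pos : 0 < d := by
    refine pos_of_mul_pos_left (b := 2 * (N : ℝ)) ?_ (by positivity)
    linarith
  have hδd : δ < d := lt_of_mul_lt_mul_right (hδ.trans_eq hd.symm) (by positivity)
  have index_le (j : Fin N) : (j : ℝ) + 1 ≤ N := by exact_mod_cast j.2
  have left_le (j : Fin N) : 0 ≤ 2 * (j : ℝ) * d := by positivity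
  have le_right (j : Fin N) : (2 * (j : ℝ) + 2) * d ≤ b - a := by
    nlinarith [index_le j]
  have exists_near (j : Fin N) : ∃ γ ∈ Γ, |a + (2 * (j : ℝ) + 1) * d - γ| ≤ δ :=
    hdense _ ⟨by linarith [left_le j], by linarith [le_right j]⟩
  choose g hgΓ hg using exists_near
  have g_mem (j : Fin N) : g j ∈ Set.Ioo (a + 2 * j * d) (a + (2 * j + 2) * d) := by
    obtain ⟨hlow, hup⟩ := abs_lt.mp ((hg j).trans_lt hδd)
    constructor <;> linarith
  have g_strictMono : StrictMono g := fun i j hij ↦ by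
    have hij' : (i : ℝ) + 1 ≤ j := by exact_mod_cast hij
    calc g i < a + 2 * ((i : ℝ) + 1) * d := by linarith [(g_mem i).2]
      _ ≤ a + 2 * j * d := by gcongr
      _ < g j := (g_mem j).1
  have card_lt := hΓ (Finset.univ.map ⟨g, g_strictMono.injective⟩) fun γ hγ ↦ by
    obtain ⟨j, rfl⟩ : ∃ j, g j = γ := by simpa using hγ
    exact ⟨hgΓ j, by linarith [(g_mem j).1, left_le j], by linarith [(g_mem j).2, le_right j]⟩
  simp at card_lt

theorem exists_gap_on_critical_line_general :
    ∃ A : ℝ, 0 < A ∧ ∀ x : ℝ, 3 ≤ x → ∃ T : ℝ, x < T ∧ T < x + 1 ∧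
      ∀ ρ : ℂ, riemannZeta ρ = 0 → 0 < ρ.re → A / Real.log x < |T - ρ.im| := by
  set B : ℝ := 5 / Real.log (9 / 8) with hB
  have hlog : 0 < Real.log (9 / 8) := Real.log_pos (by norm_num)
  have hB_pos : 0 < B := by positivity
  refine ⟨1 / (4 * (B + 1)), by positivity, fun x hx ↦ ?_⟩
  have one_le_log : 1 ≤ Real.log x :=
    (Real.le_log_iff_exp_le (by linarith)).mpr (Real.exp_one_lt_three.le.trans hx)
  set N : ℕ := ⌊B * Real.log x⌋₊ + 1 with hN
  have card_lt (S : Finset ℝ) (hS : (S : Set ℝ) ⊆ zetaOrdinates ∩ Set.Ioo x (x + 1)) :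
      S.card < N := by
    refine Nat.lt_succ_of_le (Nat.le_floor ?_)
    rw [hB, div_mul_eq_mul_div, le_div_iff₀ hlog]
    exact card_ordinates_mul_log_le hx
      (hS.trans (Set.inter_subset_inter_right _ Set.Ioo_subset_Icc_self))
  have N_le : (N : ℝ) ≤ (B + 1) * Real.log x := by
    have := Nat.floor_le (show 0 ≤ B * Real.log x by positivity)
    rw [hN, Nat.cast_add_one]
    linarith
  have gap_lt : 1 / (4 * (B + 1)) / Real.log x * (2 * N) < x + 1 - x := by
    calc 1 / (4 * (B + 1)) / Real.log x * (2 * N)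
        ≤ 1 / (4 * (B + 1)) / Real.log x * (2 * ((B + 1) * Real.log x)) := by gcongr
      _ = 1 / 2 := by field_simp; norm_num
      _ < x + 1 - x := by norm_num
  obtain ⟨T, ⟨hxT, hTx⟩, hT⟩ := exists_mem_Ioo_forall_lt_abs_sub (lt_add_one x) card_lt gap_lt
  exact ⟨T, hxT, hTx, fun ρ hρ hre ↦ hT _ ⟨ρ, ⟨hρ, hre⟩, rfl⟩⟩

/-- Assume RH. Then there are `A > 0` and `n₀ : ℕ` such that for every `n ≥ n₀` there is a
real `T` with `n < T < n + 1` and `|T − γ| > A / log n` for every real `γ` with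
`ζ(1/2 + iγ) = 0`; in particular no point `1/2 + iu` with `|u − T| < A / log n` is a zero
of `ζ`. -/
theorem exists_gap_on_critical_line (hRH : RiemannHypothesis) :
    ∃ A : ℝ, 0 < A ∧ ∃ n₀ : ℕ, ∀ n : ℕ, n₀ ≤ n →
      ∃ T : ℝ, (n : ℝ) < T ∧ T < (n : ℝ) + 1 ∧
        (∀ γ : ℝ, riemannZeta (1 / 2 + γ * I) = 0 → |T - γ| > A / Real.log n) ∧
        (∀ u : ℝ, |u - T| < A / Real.log n → riemannZeta (1 / 2 + u * I) ≠ 0) := by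
  obtain ⟨A, hA, hgap⟩ := exists_gap_on_critical_line_general
  refine ⟨A, hA, 3, fun n hn ↦ ?_⟩
  obtain ⟨T, hnT, hTn, hT⟩ := hgap n (by exact_mod_cast hn)
  have hT_line (γ : ℝ) (hγ : riemannZeta (1 / 2 + γ * I) = 0) : A / Real.log n < |T - γ| := by
    simpa using hT _ hγ (by simp)
  exact ⟨T, hnT, hTn, hT_line, fun u hu hζ ↦ (hT_line u hζ).not_gt (abs_sub_comm u T ▸ hu)⟩
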